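/- For real numbers \alpha, c, N, define the normalized Hahn polynomials h_n^{\alpha,c,N}(x) = \frac{1}{n!} \sum_{j=0}^n \frac{(1-N+j)_{n-j} (c+j)_{n-j}}{(n+\alpha+c-N+j)_{n-j}} \binom{n}{j} \binom{x}{j} j! (well defined whenever none of the Pochhammer symbols in the denominators vanish). Let n, m be natural numbers and suppose that \alpha + c - N - 2(n+m) \notin \{-1, -2, -3, \dots\} and 2 - (\alpha + c - N) \notin \{-1, -2, -3, \dots\} (so that all Hahn polynomials appearing below are well defined). Then for every real x: \det\big( h^{\alpha, \, c-n-m, \, N+n+m}_{m+j-1}(x+i-1) \big)_{i,j=1}^n = (-1)^{nm} \det\big( h^{-\alpha, \, 2-c, \, -N}_{n+j-1}(-x+i-1) \big)_{i,j=1}^m, where the determinant of a 0\times 0 matrix equals 1. -/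

import Mathlib

/-- The generalized binomial coefficient `x choose j = x(x-1)⋯(x-j+1)/j!`. -/
noncomputable def gbinom (x : ℝ) (j : ℕ) : ℝ :=
  (∏ k ∈ Finset.range j, (x - k)) / j.factorial

/-- The Pochhammer symbol `(y)_l = y (y+1) ⋯ (y+l-1)`. -/
noncomputable def poch (y : ℝ) (l : ℕ) : ℝ := ∏ k ∈ Finset.range l, (y + k)

/-- The normalized Hahn polynomial
`h_n^{α,c,N}(x) = (1/n!) ∑_{j=0}^n ((1-N+j)_{n-j} (c+j)_{n-j} / (n+α+c-N+j)_{n-j})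
  C(n,j) C(x,j) j!`. -/
noncomputable def hahn (α c N : ℝ) (n : ℕ) (x : ℝ) : ℝ :=
  (1 / n.factorial) * ∑ j ∈ Finset.range (n + 1),
    (poch (1 - N + j) (n - j) * poch (c + j) (n - j) /
        poch (n + α + c - N + j) (n - j)) *
      (n.choose j : ℝ) * gbinom x j * j.factorial


lemma poch_succ (y : ℝ) (l : ℕ) : poch y (l+1) = poch y l * (y + l) := by
  simp [poch, Finset.prod_range_succ]

lemma poch_add (y : ℝ) (a b : ℕ) : poch y (a + b) = poch y a * poch (y + a) b := by
  simp [poch, Finset.prod_range_add, add_assoc]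

lemma poch_neg (y : ℝ) (l : ℕ) : poch (1 - y - l) l = (-1)^l * poch y l := by
  unfold poch
  rw [← Finset.prod_range_reflect, ← Finset.card_range l, ← Finset.prod_const,
    Finset.card_range, ← Finset.prod_mul_distrib]
  refine Finset.prod_congr rfl fun k hk => ?_
  have hk := Finset.mem_range.1 hk
  have : ((l - 1 - k : ℕ) : ℝ) = l - 1 - k := by
    rw [Nat.cast_sub (by omega), Nat.cast_sub (by omega)]; simp
  rw [this]; ring

lemma poch_ne_zero (y : ℝ) (l : ℕ) (h : ∀ k < l, y + (k:ℕ) ≠ 0) : poch y l ≠ 0 :=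
  Finset.prod_ne_zero_iff.2 fun k hk => h k (Finset.mem_range.1 hk)

lemma gbinom_zero (x : ℝ) : gbinom x 0 = 1 := by simp [gbinom]

lemma gbinom_zero_succ (j : ℕ) : gbinom 0 (j+1) = 0 := by
  simp [gbinom, Finset.prod_range_succ']

lemma gbinom_pascal (x : ℝ) (j : ℕ) :
    gbinom (x+1) (j+1) = gbinom x (j+1) + gbinom x j := by
  unfold gbinom
  rw [Finset.prod_range_succ', Finset.prod_range_succ, Nat.factorial_succ]
  have : ∏ k ∈ Finset.range j, (x + 1 - ((k+1 : ℕ):ℝ)) = ∏ k ∈ Finset.range j, (x - k) :=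
    Finset.prod_congr rfl fun k _ => by push_cast; ring
  rw [this]
  have : (j.factorial : ℝ) ≠ 0 := by positivity
  have : (j + 1 : ℝ) ≠ 0 := by positivity
  push_cast
  field_simp
  ring

lemma hahn_diff (α c N : ℝ) (n : ℕ) (x : ℝ) :
    hahn α c N (n+1) (x+1) = hahn α c N (n+1) x + hahn α (c+1) (N-1) n x := by
  unfold hahn
  rw [Finset.sum_range_succ' _ (n+1), Finset.sum_range_succ' _ (n+1)]
  simp only [gbinom_zero, gbinom_pascal]
  have key : (1 / (n.factorial : ℝ)) * ∑ j ∈ Finset.range (n + 1),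
    (poch (1 - (N-1) + j) (n - j) * poch (c + 1 + j) (n - j) /
        poch (n + α + (c+1) - (N-1) + j) (n - j)) *
      (n.choose j : ℝ) * gbinom x j * j.factorial = (1 / ((n+1).factorial : ℝ)) *
      ∑ j ∈ Finset.range (n + 1),
    (poch (1 - N + (j+1 : ℕ)) (n + 1 - (j+1)) * poch (c + (j+1 : ℕ)) (n + 1 - (j+1)) /
        poch ((n+1 : ℕ) + α + c - N + (j+1 : ℕ)) (n + 1 - (j+1))) *
      ((n+1).choose (j+1) : ℝ) * gbinom x j * (j+1).factorial := by
    rw [Finset.mul_sum, Finset.mul_sum]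
    refine Finset.sum_congr rfl fun j _ => ?_
    have e1 : 1 - N + ((j+1 : ℕ):ℝ) = 1 - (N-1) + j := by push_cast; ring
    have e2 : c + ((j+1 : ℕ):ℝ) = c + 1 + j := by push_cast; ring
    have e3 : ((n+1 : ℕ):ℝ) + α + c - N + ((j+1 : ℕ):ℝ) = n + α + (c+1) - (N-1) + j := by
      push_cast; ring
    rw [e1, e2, e3, Nat.add_sub_add_right]
    have h := Nat.add_one_mul_choose_eq n j
    have h' : ((n:ℝ)+1) * n.choose j = (n+1).choose (j+1) * (j+1) := by exact_mod_cast h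
    have : (n.factorial : ℝ) ≠ 0 := by positivity
    have : (n + 1 : ℝ) ≠ 0 := by positivity
    rw [Nat.factorial_succ n, Nat.factorial_succ j]
    generalize poch (1 - (N-1) + j) (n - j) * poch (c + 1 + j) (n - j) /
        poch (n + α + (c+1) - (N-1) + j) (n - j) = Q
    push_cast
    field_simp
    linear_combination (Q * gbinom x j) * h'
  rw [key]
  simp only [mul_add, add_mul, Finset.sum_add_distrib]
  ring

lemma hahn_zero_deg (α c N x : ℝ) : hahn α c N 0 x = 1 := by
  simp [hahn, poch, gbinom]

lemma hahn_at_zero (α c N : ℝ) (n : ℕ) :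
    hahn α c N n 0 = (1 / n.factorial) * (poch (1 - N) n * poch c n / poch (n + α + c - N) n) := by
  unfold hahn
  rw [Finset.sum_range_succ']
  simp [gbinom_zero, gbinom_zero_succ]

/-- polynomial functions -/
def IsPolyFun (f : ℝ → ℝ) : Prop := ∃ p : Polynomial ℝ, ∀ x, f x = p.eval x

lemma IsPolyFun.sum {ι : Type*} (s : Finset ι) (f : ι → ℝ → ℝ) (h : ∀ i, IsPolyFun (f i)) :
    IsPolyFun fun x => ∑ i ∈ s, f i x := by
  choose p hp using h
  exact ⟨∑ i ∈ s, p i, fun x => by simp [Polynomial.eval_finsetSum, hp]⟩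

lemma IsPolyFun.mul {f g : ℝ → ℝ} (hf : IsPolyFun f) (hg : IsPolyFun g) :
    IsPolyFun fun x => f x * g x := by
  obtain ⟨p, hp⟩ := hf
  obtain ⟨q, hq⟩ := hg
  exact ⟨p * q, fun x => by simp [hp, hq]⟩

lemma IsPolyFun.const (a : ℝ) : IsPolyFun fun _ => a := ⟨Polynomial.C a, by simp⟩

lemma IsPolyFun.neg_arg {f : ℝ → ℝ} (hf : IsPolyFun f) : IsPolyFun fun x => f (-x) := by
  obtain ⟨p, hp⟩ := hf
  exact ⟨p.comp (-Polynomial.X), fun x => by simp [hp]⟩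

lemma isPolyFun_gbinom (j : ℕ) : IsPolyFun fun x => gbinom x j := by
  refine ⟨Polynomial.C ((j.factorial : ℝ)⁻¹) *
    ∏ k ∈ Finset.range j, (Polynomial.X - Polynomial.C (k:ℝ)), fun x => ?_⟩
  simp [gbinom, Polynomial.eval_prod]
  ring

lemma isPolyFun_hahn (α c N : ℝ) (n : ℕ) : IsPolyFun fun x => hahn α c N n x := by
  unfold hahn
  exact (IsPolyFun.const _).mul (IsPolyFun.sum _ _ fun j =>
    ((IsPolyFun.const _).mul (isPolyFun_gbinom j)).mul (IsPolyFun.const _))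

lemma IsPolyFun.periodic {f : ℝ → ℝ} (hf : IsPolyFun f) (h : ∀ x, f (x+1) = f x) (x : ℝ) :
    f x = f 0 := by
  obtain ⟨p, hp⟩ := hf
  have hn : ∀ n : ℕ, f n = f 0 := fun n => by
    induction n with
    | zero => simp
    | succ n ih => push_cast; rw [h, ih]
  have : p = Polynomial.C (f 0) := by
    apply Polynomial.eq_of_infinite_eval_eq
    refine Set.Infinite.mono ?_ (Set.infinite_range_of_injective (Nat.cast_injective (R := ℝ)))
    rintro _ ⟨n, rfl⟩
    simp [← hp, hn]
  rw [hp, this]; simp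

/-- The matrix of differences. -/
noncomputable def DD (α c N : ℝ) (l i : ℕ) (x : ℝ) : ℝ :=
  if l ≤ i then hahn α (c + l) (N - l) (i - l) x else 0

lemma DD_succ (α c N : ℝ) (l i : ℕ) (x : ℝ) :
    DD α c N l i (x+1) = DD α c N l i x + DD α c N (l+1) i x := by
  unfold DD
  rcases lt_trichotomy l i with h | h | h
  · obtain ⟨d, rfl⟩ := Nat.exists_eq_add_of_lt h
    rw [if_pos (by omega), if_pos (by omega), if_pos (by omega)]
    rw [show l + d + 1 - l = d + 1 by omega, show l + d + 1 - (l+1) = d by omega, hahn_diff]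
    push_cast
    ring_nf
  · subst h
    simp [hahn_zero_deg]
  · rw [if_neg (by omega), if_neg (by omega), if_neg (by omega)]; simp

/-- The inverse matrix. -/
noncomputable def WW (α c N : ℝ) (i l : ℕ) (x : ℝ) : ℝ :=
  if i ≤ l then hahn (-α) (1 - c - l) (1 - N + l) (l - i) (-x) else 0

lemma WW_succ (α c N : ℝ) (i l : ℕ) (x : ℝ) :
    WW α c N i (l+1) x = WW α c N i (l+1) (x+1) + WW α c N i l (x+1) := by
  unfold WW
  rcases lt_trichotomy i (l+1) with h | h | h
  · obtain ⟨d, rfl⟩ := Nat.exists_eq_add_of_le (Nat.lt_succ_iff.1 h)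
    rw [if_pos (by omega), if_pos (by omega), if_pos (by omega)]
    rw [show i + d + 1 - i = d + 1 by omega, show i + d - i = d by omega,
      show -x = -(x+1) + 1 by ring, hahn_diff]
    push_cast
    ring_nf
  · subst h
    simp [hahn_zero_deg]
  · rw [if_neg (by omega), if_neg (by omega), if_neg (by omega)]; simp

lemma WW_zero (α c N : ℝ) (i : ℕ) (x : ℝ) :
    WW α c N i 0 x = WW α c N i 0 (x+1) := by
  unfold WW
  simp [hahn_zero_deg]

lemma sum_const (α c N : ℝ) (i k K : ℕ) (hk : k ≤ K) (x : ℝ) :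
    ∑ l ∈ Finset.range (K+1), WW α c N i l x * DD α c N l k x =
    ∑ l ∈ Finset.range (K+1), WW α c N i l 0 * DD α c N l k 0 := by
  refine IsPolyFun.periodic
    (f := fun x => ∑ l ∈ Finset.range (K+1), WW α c N i l x * DD α c N l k x) ?_ ?_ x
  · refine IsPolyFun.sum _ _ fun l => IsPolyFun.mul ?_ ?_
    · unfold WW
      split_ifs
      · exact (isPolyFun_hahn _ _ _ _).neg_arg
      · exact IsPolyFun.const 0
    · unfold DD
      split_ifs
      · exact isPolyFun_hahn _ _ _ _
      · exact IsPolyFun.const 0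
  · intro x
    have hD : DD α c N (K+1) k x = 0 := by unfold DD; rw [if_neg (by omega)]
    have h1 : ∑ l ∈ Finset.range (K+1), WW α c N i l (x+1) * DD α c N l k (x+1) =
      ∑ l ∈ Finset.range (K+1), WW α c N i l (x+1) * DD α c N l k x +
      ∑ l ∈ Finset.range K, WW α c N i l (x+1) * DD α c N (l+1) k x := by
      simp only [DD_succ, mul_add, Finset.sum_add_distrib]
      rw [Finset.sum_range_succ (fun l => WW α c N i l (x+1) * DD α c N (l+1) k x), hD]
      simp
    rw [h1, Finset.sum_range_succ' _ K, Finset.sum_range_succ' _ K, WW_zero α c N i x]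
    simp only [WW_succ α c N i _ x, add_mul, Finset.sum_add_distrib]
    ring

lemma alt_sum (a : ℝ) (d : ℕ) :
    ∑ t ∈ Finset.range (d+2), (-1:ℝ)^t * ((d+1).choose t) * poch (a + t) d = 0 := by
  let P : Polynomial ℝ := ∏ k ∈ Finset.range d, (Polynomial.X + Polynomial.C (a + k))
  have hP : P.natDegree < d + 1 := by
    refine Nat.lt_succ_of_le ((Polynomial.natDegree_prod_le _ _).trans ?_)
    refine (Finset.sum_le_sum (g := fun _ => 1) fun k _ => ?_).trans (by simp)
    rw [Polynomial.natDegree_X_add_C]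
  have h := congrFun (Polynomial.fwdDiff_iter_eq_zero_of_degree_lt hP) 0
  rw [fwdDiff_iter_eq_sum_shift] at h
  have h2 : ∀ t ∈ Finset.range (d+2), (-1:ℝ)^t * ((d+1).choose t) * poch (a + t) d
      = (-1)^(d+1) * ((((-1:ℤ) ^ (d + 1 - t) * ((d + 1).choose t : ℤ)) • P.eval (0 + t • (1:ℝ)))) := by
    intro t ht
    have ht := Finset.mem_range.1 ht
    obtain ⟨s, hs⟩ := Nat.exists_eq_add_of_le (Nat.lt_succ_iff.1 ht)
    have : P.eval (0 + t • (1:ℝ)) = poch (a + t) d := by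
      simp only [P, Polynomial.eval_prod, poch]
      refine Finset.prod_congr rfl fun k _ => ?_
      simp; ring
    rw [this, hs, Nat.add_sub_cancel_left, zsmul_eq_mul]
    push_cast
    have : (-1:ℝ)^(t+s) * (-1)^s = (-1)^t := by rw [pow_add, mul_assoc, ← mul_pow]; simp
    rw [← this]; ring
  rw [Finset.sum_congr rfl h2, ← Finset.mul_sum, h]
  simp

lemma base_sum (α c N : ℝ) (d : ℕ) (h : ∀ k : ℕ, α + c - N + ((k:ℝ) + 1) ≠ 0) :
    ∑ t ∈ Finset.range (d+2), hahn (-α) (1 - c - t) (1 - N + t) t 0 *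
      hahn α (c + t) (N - t) (d + 1 - t) 0 = 0 := by
  set A := α + c - N with hA
  have key : ∀ t ∈ Finset.range (d+2), hahn (-α) (1 - c - t) (1 - N + t) t 0 *
      hahn α (c + t) (N - t) (d + 1 - t) 0 =
      (poch (1-N) (d+1) * poch c (d+1) / (poch (A+1) (2*d+1) * (d+1).factorial)) *
      ((-1:ℝ)^t * ((d+1).choose t) * poch ((A + 1) + t) d) := by
    intro t ht
    obtain ⟨s, hs⟩ := Nat.exists_eq_add_of_le (Nat.lt_succ_iff.1 (Finset.mem_range.1 ht))
    have hsR : (d:ℝ) + 1 = t + s := by exact_mod_cast hs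
    rw [hahn_at_zero, hahn_at_zero, hs, Nat.add_sub_cancel_left]
    rw [show 1 - (1 - N + (t:ℝ)) = 1 - (1-N) - t by ring, poch_neg, poch_neg,
      show (t:ℝ) + -α + (1 - c - t) - (1 - N + t) = 1 - (A + 1) - t by rw [hA]; ring, poch_neg,
      show (1:ℝ) - (N - t) = 1 - N + t by ring,
      show (s:ℝ) + α + (c + t) - (N - t) = A + 1 + t + d by rw [hA]; linear_combination -hsR,
      poch_add, poch_add]
    have e : poch (A+1) (2*d+1) = poch (A+1) t * poch (A + 1 + t) d * poch (A+1+t+d) s := by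
      rw [show 2*d+1 = t + d + s by omega, poch_add, poch_add]; push_cast; ring_nf
    have hne : poch (A+1) (2*d+1) ≠ 0 := poch_ne_zero _ _ fun k _ => by
      have := h k; rwa [show A + 1 + (k:ℝ) = A + (k+1) by ring]
    rw [e] at hne ⊢
    have n1 := left_ne_zero_of_mul (left_ne_zero_of_mul hne)
    have n2 := right_ne_zero_of_mul (left_ne_zero_of_mul hne)
    have n3 := right_ne_zero_of_mul hne
    have hc : ((t+s).choose t : ℝ) * t.factorial * s.factorial = (t+s).factorial := by
      have := Nat.choose_mul_factorial_mul_factorial (Nat.le_add_right t s)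
      rw [Nat.add_sub_cancel_left] at this
      exact_mod_cast this
    have f0 : ((t+s).choose t : ℝ) ≠ 0 := by
      have := Nat.choose_pos (Nat.le_add_right t s)
      positivity
    have f1 : (t.factorial : ℝ) ≠ 0 := by positivity
    have f2 : (s.factorial : ℝ) ≠ 0 := by positivity
    have f3 : ((-1:ℝ))^t ≠ 0 := by simp
    rw [← hc]
    field_simp
    
  rw [Finset.sum_congr rfl key, ← Finset.mul_sum, alt_sum, mul_zero]

lemma WD (α c N : ℝ) (h : ∀ k : ℕ, α + c - N + ((k:ℝ) + 1) ≠ 0) (i k K : ℕ) (hk : k ≤ K) (x : ℝ) :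
    ∑ l ∈ Finset.range (K+1), WW α c N i l x * DD α c N l k x = if i = k then 1 else 0 := by
  rw [sum_const α c N i k K hk]
  rcases lt_trichotomy i k with hik | hik | hik
  · obtain ⟨d, rfl⟩ := Nat.exists_eq_add_of_lt hik
    rw [if_neg (by omega)]
    have := base_sum α (c+i) (N-i) d (fun k => by
      have := h (2*i+k)
      push_cast at this
      rwa [show α + (c+i) - (N-i) + ((k:ℝ)+1) = α + c - N + (2*i+k+1) by ring])
    refine Eq.trans ?_ this
    rw [Finset.range_eq_Ico, Finset.range_eq_Ico]
    rw [← Finset.sum_subset (s₁ := Finset.Ico i (i+(d+2)))]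
    · rw [Finset.sum_Ico_eq_sum_range, ← Finset.range_eq_Ico]
      rw [Nat.add_sub_cancel_left]
      refine Finset.sum_congr rfl fun t ht => ?_
      have ht := Finset.mem_range.1 ht
      unfold WW DD
      rw [if_pos (by omega), if_pos (by omega), Nat.add_sub_cancel_left,
        show i + d + 1 - (i + t) = d + 1 - t by omega]
      push_cast
      rw [neg_zero]
      ring_nf
    · intro t ht
      simp only [Finset.mem_Ico] at ht ⊢
      omega
    · intro t _ ht
      simp only [Finset.mem_Ico] at ht
      unfold WW DD
      by_cases h1 : i ≤ t
      · rw [if_neg (show ¬ t ≤ i + d + 1 by omega), mul_zero]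
      · rw [if_neg h1, zero_mul]
  · subst hik
    rw [if_pos rfl, Finset.sum_eq_single i]
    · simp [WW, DD, hahn_zero_deg]
    · intro t _ ht
      unfold WW DD
      by_cases h1 : i ≤ t
      · rw [if_neg (show ¬ t ≤ i by omega), mul_zero]
      · rw [if_neg h1, zero_mul]
    · intro hi
      simp at hi
      omega
  · rw [if_neg (by omega)]
    refine Finset.sum_eq_zero fun t _ => ?_
    unfold WW DD
    by_cases h1 : i ≤ t
    · rw [if_neg (show ¬ t ≤ k by omega), mul_zero]
    · rw [if_neg h1, zero_mul]

lemma det_DD (α c N : ℝ) (n : ℕ) (g : Fin n → ℕ) (x : ℝ) :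
    Matrix.det (Matrix.of fun i j : Fin n => hahn α c N (g j) (x + (i : ℕ))) =
    Matrix.det (Matrix.of fun i j : Fin n => DD α c N i (g j) x) := by
  have h1 : ∀ (i l k : ℕ), DD α c N l k (x + i) =
      ∑ s ∈ Finset.range (i+1), (i.choose s : ℝ) * DD α c N (l+s) k x := by
    intro i
    induction i with
    | zero => intro l k; simp
    | succ i ih =>
      intro l k
      push_cast
      rw [← add_assoc, DD_succ, ih, ih, Finset.sum_range_succ' _ (i+1)]
      simp only [Nat.choose_succ_succ, Nat.cast_add, add_mul, Finset.sum_add_distrib]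
      rw [Finset.sum_range_succ (fun s => ((i.choose (s+1) : ℕ) : ℝ) * DD α c N (l+(s+1)) k x) i,
        Finset.sum_range_succ' (fun s => ((i.choose s : ℕ) : ℝ) * DD α c N (l+s) k x) i]
      simp [add_assoc, add_comm, add_left_comm]
  have h2 : (Matrix.of fun i j : Fin n => hahn α c N (g j) (x + (i : ℕ))) =
      (Matrix.of fun i s : Fin n => (((i:ℕ).choose (s:ℕ) : ℕ) : ℝ)) *
      (Matrix.of fun i j : Fin n => DD α c N i (g j) x) := by
    ext i j
    have := h1 i 0 (g j)
    simp only [Matrix.mul_apply, Matrix.of_apply]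
    rw [Fin.sum_univ_eq_sum_range (fun s => (((i:ℕ).choose s : ℕ) : ℝ) * DD α c N s (g j) x) n]
    rw [← Finset.sum_subset (Finset.range_mono (show (i:ℕ)+1 ≤ n from i.2))]
    · simpa [DD] using this
    · intro s _ hs
      simp only [Finset.mem_range] at hs
      rw [Nat.choose_eq_zero_of_lt (by omega)]; simp
  rw [h2, Matrix.det_mul, Matrix.det_of_isLowerTriangular]
  · simp
  · intro i j hij
    have : (i:ℕ) < j := hij
    simp [Nat.choose_eq_zero_of_lt this]

lemma rot_val (K m : ℕ) (i : Fin K) : (((finRotate K)^m) i : ℕ) = (i + m) % K := by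
  rcases K with _ | K
  · exact i.elim0
  · induction m with
    | zero => simp [Nat.mod_eq_of_lt i.2]
    | succ m ih =>
      rw [pow_succ', Equiv.Perm.mul_apply, finRotate_succ_apply, Fin.val_add, ih]
      simp [← add_assoc]

lemma rot_sign (n m : ℕ) : ((Equiv.Perm.sign ((finRotate (n+m))^m) : ℤˣ) : ℤ) = (-1)^(n*m) := by
  rcases m with _ | m
  · simp
  · rw [map_pow, sign_finRotate, ← pow_mul]
    push_cast
    rw [show (n + (m+1) - 1) * (m+1) = n*(m+1) + m*(m+1) by
      rw [show n + (m+1) - 1 = n + m by omega]; ring, pow_add,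
      Even.neg_one_pow (Nat.even_mul_succ_self m), mul_one]

lemma jacobi_block {n m : ℕ} (A B : Matrix (Fin n ⊕ Fin m) (Fin n ⊕ Fin m) ℝ) (h : A * B = 1) :
    A.toBlocks₁₁.det = A.det * B.toBlocks₂₂.det := by
  have h12 : A.toBlocks₁₁ * B.toBlocks₁₂ + A.toBlocks₁₂ * B.toBlocks₂₂ = 0 ∧
      A.toBlocks₂₁ * B.toBlocks₁₂ + A.toBlocks₂₂ * B.toBlocks₂₂ = 1 := by
    rw [← Matrix.fromBlocks_toBlocks A, ← Matrix.fromBlocks_toBlocks B,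
      Matrix.fromBlocks_multiply, ← Matrix.fromBlocks_one, Matrix.fromBlocks_inj] at h
    exact ⟨h.2.1, h.2.2.2⟩
  have e : A * Matrix.fromBlocks 1 B.toBlocks₁₂ 0 B.toBlocks₂₂ =
      Matrix.fromBlocks A.toBlocks₁₁ 0 A.toBlocks₂₁ 1 := by
    conv_lhs => rw [← Matrix.fromBlocks_toBlocks A]
    rw [Matrix.fromBlocks_multiply, h12.1, h12.2]
    simp
  have := congrArg Matrix.det e
  rw [Matrix.det_mul, Matrix.det_fromBlocks_zero₂₁, Matrix.det_fromBlocks_zero₁₂] at this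
  simpa using this.symm

/-- the symmetry of Casorati determinants of Hahn polynomials. -/
theorem hahn_casorati_symmetry (α c N : ℝ) (n m : ℕ)
    (h1 : ∀ k : ℕ, α + c - N - 2 * ((n : ℝ) + m) ≠ -((k : ℝ) + 1))
    (h2 : ∀ k : ℕ, 2 - (α + c - N) ≠ -((k : ℝ) + 1))
    (x : ℝ) :
    Matrix.det (Matrix.of fun i j : Fin n =>
      hahn α (c - n - m) (N + n + m) (m + (j : ℕ)) (x + (i : ℕ)))
    = (-1 : ℝ) ^ (n * m) *
      Matrix.det (Matrix.of fun i j : Fin m =>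
        hahn (-α) (2 - c) (-N) (n + (j : ℕ)) (-x + (i : ℕ))) := by
  set C : ℝ := c - n - m with hC
  set N0 : ℝ := N + n + m with hN0
  rw [det_DD, det_DD]
  have h : ∀ k : ℕ, α + C - N0 + ((k:ℝ) + 1) ≠ 0 := fun k hk => h1 k (by
    rw [hC, hN0] at hk; linear_combination hk)
  let MD : Matrix (Fin (n+m)) (Fin (n+m)) ℝ := Matrix.of fun l k => DD α C N0 l k x
  let MW : Matrix (Fin (n+m)) (Fin (n+m)) ℝ := Matrix.of fun l k => WW α C N0 l k x
  have hWD : MW * MD = 1 := by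
    ext i k
    have hpos : 0 < n + m := i.pos
    have := WD α C N0 h i k (n+m-1) (by omega) x
    rw [show n+m-1+1 = n+m by omega] at this
    simp only [Matrix.mul_apply, MW, MD, Matrix.of_apply, Matrix.one_apply]
    rw [Fin.sum_univ_eq_sum_range (fun l => WW α C N0 i l x * DD α C N0 l k x) (n+m), this]
    simp [Fin.ext_iff]
  have hDW : MD * MW = 1 := mul_eq_one_comm.1 hWD
  have hdet : MD.det = 1 := by
    rw [Matrix.det_of_isUpperTriangular]
    · simp [MD, DD, hahn_zero_deg]
    · intro i j hij
      have : (j:ℕ) < i := hij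
      simp only [MD, DD, Matrix.of_apply]
      rw [if_neg (by omega)]
  let σ : Equiv.Perm (Fin (n+m)) := (finRotate (n+m))^m
  let e : Fin n ⊕ Fin m ≃ Fin (n+m) := finSumFinEquiv
  have hs1 : ∀ j : Fin n, (σ (e (Sum.inl j)) : ℕ) = m + j := fun j => by
    have := j.2
    simp only [σ, rot_val, e, finSumFinEquiv_apply_left, Fin.val_castAdd]
    rw [Nat.mod_eq_of_lt (by omega), add_comm]
  have hs2 : ∀ j : Fin m, (σ (e (Sum.inr j)) : ℕ) = j := fun j => by
    have := j.2
    simp only [σ, rot_val, e, finSumFinEquiv_apply_right, Fin.val_natAdd]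
    rw [show n + (j:ℕ) + m = j + (n+m) by ring, Nat.add_mod_right, Nat.mod_eq_of_lt (by omega)]
  let A : Matrix (Fin n ⊕ Fin m) (Fin n ⊕ Fin m) ℝ := MD.submatrix e (e.trans σ)
  let B : Matrix (Fin n ⊕ Fin m) (Fin n ⊕ Fin m) ℝ := MW.submatrix (e.trans σ) e
  have hAB : A * B = 1 := by
    simp only [A, B]
    rw [Matrix.submatrix_mul_equiv, hDW, Matrix.submatrix_one_equiv]
  have hA : A.det = (-1)^(n*m) := by
    have : A = (MD.submatrix id σ).submatrix e e := rfl
    rw [this, Matrix.det_submatrix_equiv_self, Matrix.det_permute', hdet, mul_one]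
    have := rot_sign n m
    exact_mod_cast congrArg (Int.cast : ℤ → ℝ) this
  have hJ := jacobi_block A B hAB
  rw [hA] at hJ
  have hL : A.toBlocks₁₁ = Matrix.of fun i j : Fin n => DD α C N0 i (m + (j:ℕ)) x := by
    ext i j
    simp only [Matrix.toBlocks₁₁, A, MD, Matrix.of_apply, Matrix.submatrix_apply,
      Equiv.trans_apply, hs1]
    simp [e]
  have hR : B.toBlocks₂₂ = ((Matrix.of fun i j : Fin m =>
      DD (-α) (2-c) (-N) i (n + (j:ℕ)) (-x)).transpose).submatrix Fin.revPerm Fin.revPerm := by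
    ext i j
    simp only [Matrix.toBlocks₂₂, B, MW, Matrix.of_apply, Matrix.submatrix_apply,
      Equiv.trans_apply, hs2, Matrix.transpose_apply, Fin.revPerm_apply, Fin.val_rev]
    simp only [e, finSumFinEquiv_apply_right, Fin.val_natAdd]
    unfold WW DD
    have hi := i.2
    have hj := j.2
    by_cases hij : (i:ℕ) ≤ n + j
    · rw [if_pos hij, if_pos (by omega)]
      have : ((m - ((j:ℕ)+1) : ℕ) : ℝ) = m - (j+1) := by
        rw [Nat.cast_sub (by omega)]; push_cast; ring
      rw [this, show n + (m - ((i:ℕ)+1)) - (m - ((j:ℕ)+1)) = n + j - i by omega]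
      congr 1
      · rw [hC]; push_cast; ring
      · rw [hN0]; push_cast; ring
    · rw [if_neg hij, if_neg (by omega)]
  rw [hL, hR, Matrix.det_submatrix_equiv_self, Matrix.det_transpose] at hJ
  exact hJ
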